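/- Let n jobs be given, where job j has processing time p_j ∈ ℕ, weight w_j ∈ ℕ and due date d_j ∈ ℕ. For J ⊆ {1,…,n} and t ∈ ℕ, define OPT[J,t] ∈ ℕ as the minimum of ∑_{j∈J} w_j·max(0, C_j(π) − d_j) over all linear orderings π of J processed consecutively without idle time starting at time t. Then for every J ⊆ {1,…,n} of even cardinality and every t ∈ ℕ, OPT[J,t] = min over all X ⊆ J with |X| = |J|/2 of ( OPT[X, t] + OPT[J∖X, t + p(X)] ), where p(X) = ∑_{k∈X} p_k. -/

import Mathlib

/-- Total weighted tardiness of the jobs in the list, processed consecutively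
without idle time starting at time `t`, in the order given by the list
(`t + p j - d j` is the truncated subtraction on `ℕ`, i.e. `max 0 (C_j - d_j)`). -/
def tardCost {n : ℕ} (p w d : Fin n → ℕ) : ℕ → List (Fin n) → ℕ
  | _, [] => 0
  | t, j :: l => w j * ((t + p j) - d j) + tardCost p w d (t + p j) l

/-- `OPT p w d J t` : minimum total weighted tardiness over all orderings of `J`
processed consecutively without idle time starting at time `t`. -/
noncomputable def OPT {n : ℕ} (p w d : Fin n → ℕ) (J : Finset (Fin n)) (t : ℕ) : ℕ :=
  sInf { v : ℕ | ∃ l : List (Fin n), l.Nodup ∧ l.toFinset = J ∧ v = tardCost p w d t l }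

theorem tardCost_append {n : ℕ} (p w d : Fin n → ℕ) (t : ℕ) (l₁ l₂ : List (Fin n)) :
    tardCost p w d t (l₁ ++ l₂) =
      tardCost p w d t l₁ + tardCost p w d (t + (l₁.map p).sum) l₂ := by
  induction l₁ generalizing t with
  | nil => simp [tardCost]
  | cons j l ih => simp [tardCost, ih, add_assoc]

theorem OPT_le_tardCost {n : ℕ} (p w d : Fin n → ℕ) (t : ℕ) {l : List (Fin n)} (hl : l.Nodup) :
    OPT p w d l.toFinset t ≤ tardCost p w d t l :=
  Nat.sInf_le ⟨l, hl, rfl, rfl⟩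

theorem exists_tardCost_eq_OPT {n : ℕ} (p w d : Fin n → ℕ) (J : Finset (Fin n)) (t : ℕ) :
    ∃ l : List (Fin n), l.Nodup ∧ l.toFinset = J ∧ OPT p w d J t = tardCost p w d t l :=
  Nat.sInf_mem (s := {v : ℕ | ∃ l : List (Fin n),
    l.Nodup ∧ l.toFinset = J ∧ v = tardCost p w d t l})
    ⟨_, J.toList, J.nodup_toList, J.toList_toFinset, rfl⟩

/-- Splitting the jobs into a first block `X` and the rest never beats the optimum. -/
theorem OPT_le_OPT_add_OPT_sdiff {n : ℕ} (p w d : Fin n → ℕ) {J X : Finset (Fin n)}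
    (hX : X ⊆ J) (t : ℕ) :
    OPT p w d J t ≤ OPT p w d X t + OPT p w d (J \ X) (t + ∑ k ∈ X, p k) := by
  obtain ⟨l₁, hl₁, rfl, h₁⟩ := exists_tardCost_eq_OPT p w d X t
  obtain ⟨l₂, hl₂, h₂, h₃⟩ :=
    exists_tardCost_eq_OPT p w d (J \ l₁.toFinset) (t + ∑ k ∈ l₁.toFinset, p k)
  have hnodup : (l₁ ++ l₂).Nodup := by
    refine hl₁.append hl₂ (List.disjoint_toFinset_iff_disjoint.mp ?_)
    rw [h₂]
    exact Finset.disjoint_sdiff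
  have hJ : (l₁ ++ l₂).toFinset = J := by
    rw [List.toFinset_append, h₂, Finset.union_sdiff_of_subset hX]
  have := OPT_le_tardCost p w d t hnodup
  rwa [hJ, tardCost_append, ← List.sum_toFinset p hl₁, ← h₁, ← h₃] at this

/-- For every `m ≤ |J|` some block `X` of `m` jobs attains the optimum when scheduled first. -/
theorem exists_OPT_add_OPT_sdiff_le {n : ℕ} (p w d : Fin n → ℕ) (J : Finset (Fin n)) (t : ℕ)
    {m : ℕ} (hm : m ≤ J.card) :
    ∃ X ⊆ J, X.card = m ∧
      OPT p w d X t + OPT p w d (J \ X) (t + ∑ k ∈ X, p k) ≤ OPT p w d J t := by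
  obtain ⟨l, hl, rfl, h⟩ := exists_tardCost_eq_OPT p w d J t
  rw [List.toFinset_card_of_nodup hl] at hm
  obtain ⟨l₁, l₂, rfl, rfl⟩ : ∃ l₁ l₂, l = l₁ ++ l₂ ∧ l₁.length = m :=
    ⟨l.take m, l.drop m, (List.take_append_drop m l).symm, by simpa using hm⟩
  obtain ⟨hl₁, hl₂, hdisj⟩ := List.nodup_append'.mp hl
  have hsdiff : (l₁ ++ l₂).toFinset \ l₁.toFinset = l₂.toFinset := by
    rw [List.toFinset_append, Finset.union_sdiff_cancel_left
      (List.disjoint_toFinset_iff_disjoint.mpr hdisj)]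
  refine ⟨l₁.toFinset, by simp, List.toFinset_card_of_nodup hl₁, ?_⟩
  rw [h, hsdiff, tardCost_append, List.sum_toFinset p hl₁]
  exact add_le_add (OPT_le_tardCost p w d t hl₁) (OPT_le_tardCost p w d _ hl₂)

theorem stmt3 {n : ℕ} (p w d : Fin n → ℕ) (J : Finset (Fin n)) (hJ : Even J.card) (t : ℕ) :
    OPT p w d J t =
      sInf { v : ℕ | ∃ X ⊆ J, X.card = J.card / 2 ∧
        v = OPT p w d X t + OPT p w d (J \ X) (t + ∑ k ∈ X, p k) } := by
  obtain ⟨X, hX, hcard, hle⟩ :=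
    exists_OPT_add_OPT_sdiff_le p w d J t (Nat.div_le_self J.card 2)
  apply le_antisymm
  · refine le_csInf ⟨_, X, hX, hcard, rfl⟩ ?_
    rintro v ⟨Y, hY, -, rfl⟩
    exact OPT_le_OPT_add_OPT_sdiff p w d hY t
  · exact le_trans (Nat.sInf_le (by exact ⟨X, hX, hcard, rfl⟩)) hle
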